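/- Every slice of S₊³ of dimension at most 4 is second-order cone representable. -/

import Mathlib

/-!
A space of symmetric `3 × 3` matrices of dimension at most four is orthogonal to a space of
symmetric matrices of dimension at least two (`exists_singular_orthogonal`). The latter contains a
nonzero singular matrix `B`, because the determinant is an odd function on a connected punctured
space (`exists_ne_zero_det_eq_zero`). So the slice lies in `{A ⪰ 0 : tr(AB) = 0}` with
`rank B ≤ 2`.

After a congruence every matrix of the slice has vanishing `(0, 1)` entry
(`exists_congr_of_singular`): if `B` is indefinite of rank two, its quadratic form is a product of
two independent linear forms, and if `B` is semidefinite, then `tr(AB) = 0` forces a whole row of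
the transformed `A` to vanish. Finally, a positive semidefinite matrix with vanishing `(0, 1)`
entry splits, by a Schur complement, into two positive semidefinite matrices supported on
`{0, 2}` and `{1, 2}`; positive semidefinite `2 × 2` matrices form a Lorentz cone, so this slice is
second-order cone representable (`isSOCR_arrow`). Representability is preserved by linear images
and by intersection with subspaces.
-/

open Matrix

noncomputable section

/-- The three-dimensional Lorentz cone `Q = {x ∈ ℝ³ : x₃ ≥ √(x₁² + x₂²)}`. -/
def lorentzCone : Set (Fin 3 → ℝ) :=
  {x | Real.sqrt (x 0 ^ 2 + x 1 ^ 2) ≤ x 2}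

/-- The `m`-fold Cartesian power `Qᵐ ⊆ (ℝ³)ᵐ` of the Lorentz cone. -/
def lorentzPow (m : ℕ) : Set (Fin m → Fin 3 → ℝ) :=
  {x | ∀ i, x i ∈ lorentzCone}

/-- The cone of real symmetric positive semidefinite `k × k` matrices. -/
def psdCone (k : ℕ) : Set (Matrix (Fin k) (Fin k) ℝ) :=
  {A | A.PosSemidef}

/-- For `B ∈ Sᵏ`, the slice `S_B = {A ∈ S₊ᵏ : tr(AB) = 0}` of the psd cone
orthogonal to `B` w.r.t. the trace scalar product. -/
def sliceOrth (k : ℕ) (B : Matrix (Fin k) (Fin k) ℝ) : Set (Matrix (Fin k) (Fin k) ℝ) :=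
  {A | A.PosSemidef ∧ Matrix.trace (A * B) = 0}

/-- `S` is a slice of `S₊ᵏ`: the intersection of the psd cone with a linear
subspace of the space of symmetric matrices. -/
def IsSlice (k : ℕ) (S : Set (Matrix (Fin k) (Fin k) ℝ)) : Prop :=
  ∃ L : Submodule ℝ (Matrix (Fin k) (Fin k) ℝ),
    (∀ A ∈ L, A.IsSymm) ∧ S = psdCone k ∩ (L : Set (Matrix (Fin k) (Fin k) ℝ))

/-- A set `S` in a real vector space is second-order cone representable (socr)
if it is the image under a linear map of the intersection of `Qᵐ` with a
linear subspace of `(ℝ³)ᵐ`, for some positive integer `m`. -/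
def IsSOCR {V : Type*} [AddCommGroup V] [Module ℝ V] (S : Set V) : Prop :=
  ∃ m : ℕ, 0 < m ∧ ∃ W : Submodule ℝ (Fin m → Fin 3 → ℝ),
    ∃ f : (Fin m → Fin 3 → ℝ) →ₗ[ℝ] V,
      S = f '' (lorentzPow m ∩ (W : Set (Fin m → Fin 3 → ℝ)))

/-- A symmetric matrix is indefinite if it is neither positive semidefinite
nor negative semidefinite. -/
def Indefinite (k : ℕ) (B : Matrix (Fin k) (Fin k) ℝ) : Prop :=
  ¬ B.PosSemidef ∧ ¬ (-B).PosSemidef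

/-! ### Closure properties of second-order cone representable sets -/

lemma IsSOCR.image_inter {V V' : Type*} [AddCommGroup V] [Module ℝ V]
    [AddCommGroup V'] [Module ℝ V'] {S : Set V} (hS : IsSOCR S)
    (g : V →ₗ[ℝ] V') (L : Submodule ℝ V') :
    IsSOCR (g '' S ∩ (L : Set V')) := by
  obtain ⟨m, hm, W, f, rfl⟩ := hS
  refine ⟨m, hm, W ⊓ L.comap (g ∘ₗ f), g ∘ₗ f, ?_⟩
  ext y
  constructor
  · rintro ⟨⟨_, ⟨x, ⟨hx, hxW⟩, rfl⟩, rfl⟩, hL⟩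
    exact ⟨x, ⟨hx, hxW, hL⟩, rfl⟩
  · rintro ⟨x, ⟨hx, hxW, hL⟩, rfl⟩
    exact ⟨⟨_, ⟨x, ⟨hx, hxW⟩, rfl⟩, rfl⟩, hL⟩

/-! ### The slice of matrices with vanishing `(0, 1)` entry -/

/-- The Lorentz cone is a linear copy of the cone of positive semidefinite `2 × 2` matrices. -/
lemma mem_lorentzCone_iff (x : Fin 3 → ℝ) :
    x ∈ lorentzCone ↔
      0 ≤ x 2 + x 0 ∧ 0 ≤ x 2 - x 0 ∧ x 1 ^ 2 ≤ (x 2 + x 0) * (x 2 - x 0) := by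
  simp only [lorentzCone, Set.mem_ofPred_eq, Real.sqrt_le_iff]
  constructor
  · rintro ⟨h0, h1⟩
    have h2 : |x 0| ≤ x 2 := abs_le_of_sq_le_sq (by nlinarith [sq_nonneg (x 1)]) h0
    have h3 := abs_le.mp h2
    exact ⟨by linarith, by linarith, by nlinarith⟩
  · rintro ⟨h0, h1, h2⟩
    exact ⟨by linarith, by nlinarith⟩

lemma binary_form_nonneg_iff (a d c : ℝ) :
    (∀ u w : ℝ, 0 ≤ a * u ^ 2 + 2 * d * u * w + c * w ^ 2) ↔
      0 ≤ a ∧ 0 ≤ c ∧ d ^ 2 ≤ a * c := by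
  constructor
  · intro h
    have ha : 0 ≤ a := by simpa using h 1 0
    have hc : 0 ≤ c := by simpa using h 0 1
    refine ⟨ha, hc, ?_⟩
    rcases ha.eq_or_lt with ha0 | ha0
    · subst ha0
      -- With `a = 0`, the vector `(-(c + 1), d)` gives the value `-(c + 2) d²`.
      have h1 := h (-(c + 1)) d
      nlinarith [sq_nonneg d, mul_nonneg hc (sq_nonneg d)]
    · have h1 := h (-d) a
      have h2 : 0 ≤ a * (a * c - d ^ 2) := by linarith
      linarith [nonneg_of_mul_nonneg_right h2 ha0]
  · rintro ⟨ha, hc, h⟩ u w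
    rcases ha.eq_or_lt with ha0 | ha0
    · subst ha0
      have hd : d = 0 := by nlinarith [sq_nonneg d]
      subst hd
      nlinarith [mul_nonneg hc (sq_nonneg w)]
    · have h1 : 0 ≤ a * (a * u ^ 2 + 2 * d * u * w + c * w ^ 2) := by
        nlinarith [sq_nonneg (a * u + d * w), mul_nonneg (sub_nonneg.2 h) (sq_nonneg w)]
      exact nonneg_of_mul_nonneg_right h1 ha0

lemma posSemidef_fin_three_iff (A : Matrix (Fin 3) (Fin 3) ℝ) :
    A.PosSemidef ↔ (A 1 0 = A 0 1 ∧ A 2 0 = A 0 2 ∧ A 2 1 = A 1 2) ∧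
      ∀ u v w : ℝ, 0 ≤ A 0 0 * u ^ 2 + A 1 1 * v ^ 2 + A 2 2 * w ^ 2 +
        2 * A 0 1 * u * v + 2 * A 0 2 * u * w + 2 * A 1 2 * v * w := by
  rw [Matrix.posSemidef_iff_dotProduct_mulVec]
  constructor
  · rintro ⟨hs, h⟩
    have hs' : ∀ i j, A j i = A i j := fun i j => by simpa using hs.apply i j
    refine ⟨⟨hs' _ _, hs' _ _, hs' _ _⟩, fun u v w => ?_⟩
    have := h ![u, v, w]
    simp [dotProduct, mulVec, Fin.sum_univ_three, hs' 0 1, hs' 0 2, hs' 1 2] at this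
    linarith
  · rintro ⟨⟨h1, h2, h3⟩, h⟩
    refine ⟨Matrix.IsHermitian.ext fun i j => ?_, fun x => ?_⟩
    · fin_cases i <;> fin_cases j <;> simp [h1, h2, h3]
    · have := h (x 0) (x 1) (x 2)
      simp [dotProduct, mulVec, Fin.sum_univ_three, h1, h2, h3]
      linarith

/-- The linear map sending two Lorentz vectors, read as symmetric `2 × 2` matrices, to the sum of
their embeddings in the rows and columns `{0, 2}` and `{1, 2}` of a `3 × 3` matrix. -/
def arrowMap : (Fin 2 → Fin 3 → ℝ) →ₗ[ℝ] Matrix (Fin 3) (Fin 3) ℝ where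
  toFun x := !![x 0 2 + x 0 0, 0, x 0 1; 0, x 1 2 + x 1 0, x 1 1;
    x 0 1, x 1 1, (x 0 2 - x 0 0) + (x 1 2 - x 1 0)]
  map_add' x y := by
    ext i j; fin_cases i <;> fin_cases j <;> simp <;> ring
  map_smul' c x := by
    ext i j; fin_cases i <;> fin_cases j <;> simp <;> ring

/-- A positive semidefinite matrix with vanishing `(0, 1)` entry is a sum of two positive
semidefinite matrices supported on `{0, 2}` and `{1, 2}`. -/
lemma isSOCR_arrow :
    IsSOCR {A : Matrix (Fin 3) (Fin 3) ℝ | A.PosSemidef ∧ A 0 1 = 0} := by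
  refine ⟨2, two_pos, ⊤, arrowMap, ?_⟩
  ext A
  simp only [Set.mem_ofPred_eq, Submodule.top_coe, Set.inter_univ, Set.mem_image, lorentzPow,
    Fin.forall_fin_two, mem_lorentzCone_iff]
  constructor
  · rintro ⟨hA, h01⟩
    rw [posSemidef_fin_three_iff, h01] at hA
    obtain ⟨⟨h10, h20, h21⟩, hq⟩ := hA
    obtain ⟨ha, -, hd⟩ := (binary_form_nonneg_iff (A 0 0) (A 0 2) (A 2 2)).1
      fun u w => by have := hq u 0 w; linarith
    -- The Schur complement `A₂₂ - A₀₂² / A₀₀` goes to the second summand; if `A₀₀ = 0`, then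
    -- `A₀₂ = 0` and the quotient is `0` by convention, which is the right value.
    obtain ⟨c, hc0, hc, t, ht, ht'⟩ : ∃ c : ℝ, 0 ≤ c ∧ A 0 2 ^ 2 ≤ A 0 0 * c ∧
        ∃ t : ℝ, A 0 2 + A 0 0 * t = 0 ∧ A 0 2 * t = -c := by
      refine ⟨A 0 2 ^ 2 / A 0 0, by positivity, ?_, -(A 0 2 / A 0 0), ?_, by ring⟩
      all_goals
        rcases ha.eq_or_lt with h | h
        · have h0 : A 0 2 = 0 := by
            rw [← h, zero_mul] at hd
            exact pow_eq_zero_iff two_ne_zero |>.1 (le_antisymm hd (sq_nonneg _))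
          simp [h0]
        · field_simp
          simp
    obtain ⟨hb, hc2, he⟩ := (binary_form_nonneg_iff (A 1 1) (A 1 2) (A 2 2 - c)).1
      fun v w => by
        have h1 := hq (t * w) v w
        have h2 : A 0 0 * t * t = c := by linear_combination t * ht - ht'
        have h3 : A 0 0 * (t * w) ^ 2 = c * w ^ 2 := by linear_combination w ^ 2 * h2
        have h4 : 2 * A 0 2 * (t * w) * w = -2 * c * w ^ 2 := by
          linear_combination 2 * w ^ 2 * ht'
        linarith
    refine ⟨![![(A 0 0 - c) / 2, A 0 2, (A 0 0 + c) / 2],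
      ![(A 1 1 - (A 2 2 - c)) / 2, A 1 2, (A 1 1 + (A 2 2 - c)) / 2]], ⟨⟨?_, ?_, ?_⟩, ?_, ?_, ?_⟩, ?_⟩
    · simp; linarith
    · simp; linarith
    · simp; ring_nf; linarith
    · simp; linarith
    · simp; linarith
    · simp; ring_nf; linarith
    · ext i j
      fin_cases i <;> fin_cases j <;> simp [arrowMap, h01, h10, h20, h21] <;> ring
  · rintro ⟨x, ⟨h0, h1⟩, rfl⟩
    rw [← binary_form_nonneg_iff] at h0 h1
    refine ⟨(posSemidef_fin_three_iff _).2 ⟨by simp [arrowMap], fun u v w => ?_⟩, by simp [arrowMap]⟩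
    have := h0 u w
    have := h1 v w
    simp [arrowMap]
    linarith

/-! ### A singular matrix orthogonal to the slice -/

/-- A space of real `3 × 3` matrices of dimension at least two contains a nonzero singular one:
the determinant is odd and the punctured space is connected. -/
lemma exists_ne_zero_det_eq_zero (K : Submodule ℝ (Matrix (Fin 3) (Fin 3) ℝ))
    (hK : 1 < Module.finrank ℝ K) : ∃ B ∈ K, B ≠ 0 ∧ B.det = 0 := by
  have hconn : IsConnected ({0}ᶜ : Set K) :=
    isConnected_compl_singleton_of_one_lt_rank (Module.lt_rank_of_lt_finrank (by simpa using hK)) 0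
  have hcont : Continuous fun B : K => (B : Matrix (Fin 3) (Fin 3) ℝ).det :=
    continuous_subtype_val.matrix_det
  obtain ⟨B, hB⟩ := hconn.nonempty
  have hneg : -B ∈ ({0}ᶜ : Set K) := by simpa using hB
  have hdet : ((-B : K) : Matrix (Fin 3) (Fin 3) ℝ).det = -(B : Matrix (Fin 3) (Fin 3) ℝ).det := by
    simp [Matrix.det_neg, Odd.neg_one_pow (by decide : Odd 3)]
  have key : (0 : ℝ) ∈ (fun B : K => (B : Matrix (Fin 3) (Fin 3) ℝ).det) '' ({0}ᶜ : Set K) := by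
    rcases le_total 0 (B : Matrix (Fin 3) (Fin 3) ℝ).det with h | h
    · exact hconn.isPreconnected.intermediate_value hneg hB hcont.continuousOn
        ⟨by rw [hdet]; linarith, h⟩
    · exact hconn.isPreconnected.intermediate_value hB hneg hcont.continuousOn
        ⟨h, by rw [hdet]; linarith⟩
  obtain ⟨C, hC, hC0⟩ := key
  exact ⟨C, C.2, by simpa using hC, hC0⟩

/-- Coordinates on the space of symmetric `3 × 3` matrices. -/
def symMap : (Fin 6 → ℝ) →ₗ[ℝ] Matrix (Fin 3) (Fin 3) ℝ where
  toFun x := !![x 0, x 1, x 2; x 1, x 3, x 4; x 2, x 4, x 5]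
  map_add' x y := by
    ext i j; fin_cases i <;> fin_cases j <;> simp
  map_smul' c x := by
    ext i j; fin_cases i <;> fin_cases j <;> simp

lemma symMap_injective : Function.Injective symMap := by
  intro x y h
  have h' : ∀ i j, symMap x i j = symMap y i j := fun i j => by rw [h]
  have h00 := h' 0 0
  have h01 := h' 0 1
  have h02 := h' 0 2
  have h11 := h' 1 1
  have h12 := h' 1 2
  have h22 := h' 2 2
  simp [symMap] at h00 h01 h02 h11 h12 h22
  ext i
  fin_cases i <;> assumption

lemma symMap_isSymm (x : Fin 6 → ℝ) : (symMap x).IsSymm := by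
  ext i j; fin_cases i <;> fin_cases j <;> simp [symMap]

/-- The symmetric matrices orthogonal to a space of dimension at most four form a space of
dimension at least two, which contains a nonzero singular matrix. -/
lemma exists_singular_orthogonal (U : Submodule ℝ (Matrix (Fin 3) (Fin 3) ℝ))
    (hU : Module.finrank ℝ U ≤ 4) :
    ∃ B : Matrix (Fin 3) (Fin 3) ℝ, B.IsSymm ∧ B ≠ 0 ∧ B.det = 0 ∧
      ∀ A ∈ U, Matrix.trace (A * B) = 0 := by
  let φ : (Fin 6 → ℝ) →ₗ[ℝ] Module.Dual ℝ U :=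
    LinearMap.mk₂ ℝ (fun (x : Fin 6 → ℝ) (A : U) =>
        Matrix.trace ((A : Matrix (Fin 3) (Fin 3) ℝ) * symMap x))
      (fun x y A => by simp [Matrix.mul_add])
      (fun c x A => by simp)
      (fun x A A' => by simp [Matrix.add_mul])
      (fun c x A => by simp)
  have hrank := φ.finrank_range_add_finrank_ker
  have hrange : Module.finrank ℝ (LinearMap.range φ) ≤ 4 :=
    (Submodule.finrank_le _).trans (by rwa [Subspace.dual_finrank_eq])
  have hker : Module.finrank ℝ ((LinearMap.ker φ).map symMap) =
      Module.finrank ℝ (LinearMap.ker φ) :=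
    (Submodule.equivMapOfInjective symMap symMap_injective _).finrank_eq.symm
  simp only [Module.finrank_fin_fun] at hrank
  obtain ⟨_, ⟨x, hx, rfl⟩, h0, hdet⟩ :=
    exists_ne_zero_det_eq_zero ((LinearMap.ker φ).map symMap) (by omega)
  exact ⟨symMap x, symMap_isSymm x, h0, hdet, fun A hA => LinearMap.congr_fun hx ⟨A, hA⟩⟩

/-! ### Conjugating the slice -/

/-- For a nonzero diagonal matrix `diag (p, q, 0)`, the positive semidefinite matrices orthogonal
to it have vanishing `(0, 1)` entry after a fixed congruence. -/
lemma exists_congr_of_diag (p q : ℝ) (hpq : p ≠ 0 ∨ q ≠ 0) :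
    ∃ M : Matrix (Fin 3) (Fin 3) ℝ, IsUnit M ∧
      ∀ A : Matrix (Fin 3) (Fin 3) ℝ, A.PosSemidef → p * A 0 0 + q * A 1 1 = 0 →
        (Mᵀ * A * M) 0 1 = 0 := by
  rcases lt_or_ge (p * q) 0 with h | h
  · -- Here `p u² + q v²` is a product of two independent linear forms.
    have hp : 0 < |p| := abs_pos.2 (by rintro rfl; simp at h)
    have hq : 0 < |q| := abs_pos.2 (by rintro rfl; simp at h)
    refine ⟨!![√|p|, √|p|, 0; √|q|, -√|q|, 0; 0, 0, 1], ?_, fun A hA hz => ?_⟩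
    · rw [Matrix.isUnit_iff_isUnit_det, isUnit_iff_ne_zero]
      have := Real.sqrt_pos.2 hp
      have := Real.sqrt_pos.2 hq
      have h2 : 0 < √|p| * √|q| := by positivity
      simp [Matrix.det_fin_three]
      intro h3
      linarith
    · obtain ⟨⟨h10, -, -⟩, -⟩ := (posSemidef_fin_three_iff A).1 hA
      have e1 := Real.mul_self_sqrt hp.le
      have e2 := Real.mul_self_sqrt hq.le
      have e3 : |p| * A 0 0 - |q| * A 1 1 = 0 := by
        rcases mul_neg_iff.1 h with ⟨hp', hq'⟩ | ⟨hp', hq'⟩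
        · rw [abs_of_pos hp', abs_of_neg hq']; linarith
        · rw [abs_of_neg hp', abs_of_pos hq']; linarith
      simp [Matrix.mul_apply, Fin.sum_univ_three, h10]
      linear_combination e3 + A 0 0 * e1 - A 1 1 * e2
  · -- Here one of the two diagonal entries vanishes, hence so does its row.
    refine ⟨1, isUnit_one, fun A hA hz => ?_⟩
    obtain ⟨-, hq'⟩ := (posSemidef_fin_three_iff A).1 hA
    obtain ⟨h0, h1, h2⟩ := (binary_form_nonneg_iff (A 0 0) (A 0 1) (A 1 1)).1
      fun u v => by have := hq' u v 0; linarith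
    have h3 : A 0 0 * A 1 1 = 0 := by
      rcases hpq with hp | hq
      · have : p ^ 2 * A 0 0 + (p * q) * A 1 1 = 0 := by linear_combination p * hz
        have h4 := mul_nonneg h h1
        have h5 : p ^ 2 * A 0 0 = 0 := le_antisymm (by linarith) (by positivity)
        simp [hp] at h5
        simp [h5]
      · have : (p * q) * A 0 0 + q ^ 2 * A 1 1 = 0 := by linear_combination q * hz
        have h4 := mul_nonneg h h0
        have h5 : q ^ 2 * A 1 1 = 0 := le_antisymm (by linarith) (by positivity)
        simp [hq] at h5
        simp [h5]
    rw [h3] at h2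
    simpa using pow_eq_zero_iff two_ne_zero |>.1 (le_antisymm h2 (sq_nonneg _))

/-- The version of `exists_congr_of_diag` for an arbitrary singular matrix, reduced to it by
diagonalization. -/
lemma exists_congr_of_singular (B : Matrix (Fin 3) (Fin 3) ℝ) (hB : B.IsSymm) (hB0 : B ≠ 0)
    (hdet : B.det = 0) :
    ∃ M : Matrix (Fin 3) (Fin 3) ℝ, IsUnit M ∧
      ∀ A : Matrix (Fin 3) (Fin 3) ℝ, A.PosSemidef → Matrix.trace (A * B) = 0 →
        (Mᵀ * A * M) 0 1 = 0 := by
  have hH : B.IsHermitian := by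
    rw [Matrix.IsHermitian, Matrix.conjTranspose_eq_transpose_of_trivial]; exact hB
  let d := hH.eigenvalues
  let O : Matrix (Fin 3) (Fin 3) ℝ := hH.eigenvectorUnitary
  have hspec : B = O * Matrix.diagonal d * Oᵀ := by
    have := hH.spectral_theorem
    simpa [Unitary.conjStarAlgAut_apply, Matrix.star_eq_conjTranspose,
      Matrix.conjTranspose_eq_transpose_of_trivial] using this
  have hO : IsUnit O := (Unitary.toUnits hH.eigenvectorUnitary).isUnit
  obtain ⟨k, hk⟩ : ∃ k, d k = 0 := by
    have h := hH.det_eq_prod_eigenvalues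
    rw [hdet] at h
    obtain ⟨k, -, hk⟩ := Finset.prod_eq_zero_iff.1 h.symm
    exact ⟨k, by simpa using hk⟩
  let σ : Equiv.Perm (Fin 3) := Equiv.swap 2 k
  have hσ : d (σ 2) = 0 := by simpa [σ] using hk
  have hd : d (σ 0) ≠ 0 ∨ d (σ 1) ≠ 0 := by
    by_contra! hcon
    have hd0 : d = 0 := by
      funext i
      obtain ⟨j, rfl⟩ := σ.surjective i
      fin_cases j
      exacts [hcon.1, hcon.2, hσ]
    apply hB0
    rw [hspec, hd0]
    simp
  obtain ⟨M, hM, hMA⟩ := exists_congr_of_diag _ _ hd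
  -- `R` permutes the coordinates so that the zero eigenvalue comes last.
  let R : Matrix (Fin 3) (Fin 3) ℝ := (1 : Matrix (Fin 3) (Fin 3) ℝ).submatrix id σ
  have hR : IsUnit R := by
    rw [Matrix.isUnit_iff_isUnit_det, isUnit_iff_ne_zero]
    have := Matrix.det_permute' σ (1 : Matrix (Fin 3) (Fin 3) ℝ)
    rw [this]
    simp
  have hRconj : ∀ A : Matrix (Fin 3) (Fin 3) ℝ, Rᵀ * A * R = A.submatrix σ σ := by
    intro A
    ext i j
    simp [R, Matrix.mul_apply, Matrix.one_apply]
  refine ⟨O * R * M, (hO.mul hR).mul hM, fun A hA htr => ?_⟩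
  have hA' : (Oᵀ * A * O).PosSemidef := by
    simpa [Matrix.conjTranspose_eq_transpose_of_trivial] using hA.conjTranspose_mul_mul_same O
  have htr' : ∑ i, (Oᵀ * A * O) i i * d i = 0 := by
    rw [hspec, ← Matrix.mul_assoc, Matrix.trace_mul_comm, ← Matrix.mul_assoc, ← Matrix.mul_assoc]
      at htr
    simpa [Matrix.trace, Matrix.mul_diagonal] using htr
  have h := hMA ((Oᵀ * A * O).submatrix σ σ) (hA'.submatrix σ) (by
    rw [← Equiv.sum_comp σ, Fin.sum_univ_three, hσ] at htr'
    simp only [Matrix.submatrix_apply]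
    linarith)
  rw [← hRconj] at h
  simpa [Matrix.transpose_mul, Matrix.mul_assoc] using h

/-- Every slice of `S₊³` of dimension at most `4` is second-order cone
representable. -/
theorem socr_of_dim_le_four (S : Set (Matrix (Fin 3) (Fin 3) ℝ)) (hS : IsSlice 3 S)
    (hdim : Module.finrank ℝ (Submodule.span ℝ S) ≤ 4) :
    IsSOCR S := by
  obtain ⟨L, -, hSL⟩ := hS
  obtain ⟨B, hB, hB0, hdet, horth⟩ := exists_singular_orthogonal _ hdim
  obtain ⟨M, hM, hMA⟩ := exists_congr_of_singular B hB hB0 hdet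
  have hMdet : IsUnit M.det := (Matrix.isUnit_iff_isUnit_det M).1 hM
  have hMT : IsUnit Mᵀ.det := by rwa [Matrix.det_transpose]
  -- `g` undoes the congruence `A ↦ Mᵀ A M`.
  let g : Matrix (Fin 3) (Fin 3) ℝ →ₗ[ℝ] Matrix (Fin 3) (Fin 3) ℝ :=
    LinearMap.mulLeft ℝ (M⁻¹)ᵀ ∘ₗ LinearMap.mulRight ℝ M⁻¹
  convert isSOCR_arrow.image_inter g L using 1
  ext A
  constructor
  · intro hA
    have hA' := hA
    rw [hSL] at hA'
    obtain ⟨hpsd, hL⟩ := hA'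
    refine ⟨⟨Mᵀ * A * M, ⟨?_, hMA A hpsd (horth A (Submodule.subset_span hA))⟩, ?_⟩, hL⟩
    · simpa [Matrix.conjTranspose_eq_transpose_of_trivial] using
        Matrix.PosSemidef.conjTranspose_mul_mul_same hpsd M
    · simp [g, Matrix.transpose_nonsing_inv, Matrix.mul_assoc, Matrix.mul_nonsing_inv _ hMdet,
        Matrix.nonsing_inv_mul_cancel_left _ _ hMT]
  · rintro ⟨⟨X, ⟨hX, -⟩, rfl⟩, hL⟩
    rw [hSL]
    refine ⟨?_, hL⟩
    simpa [g, psdCone, Matrix.conjTranspose_eq_transpose_of_trivial, Matrix.mul_assoc] using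
      hX.conjTranspose_mul_mul_same M⁻¹
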